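/- Let K be the finite field with 16 elements and L the finite field with 16^13 elements, viewed as a K-algebra (the degree-13 extension of K). Then there exist K-linear forms x_1^*, …, x_27^*, y_1^*, …, y_27^* : L → K and elements c_1, …, c_27 ∈ L such that for all x, y ∈ L, x·y = Σ_{i=1}^{27} x_i^*(x) y_i^*(y) c_i. In particular, the bilinear complexity of multiplication in F_{16^13} over F_16 is at most 27. -/

import Mathlib

theorem frob13_aux {R : Type*} [CommRing R] (a : R) (h2 : (2 : R) = 0)
    (hm : 1 + a^2 + a^4 + a^5 + a^6 + a^9 + a^11 + a^12 + a^13 = 0) :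
    a ^ 16 = 1 + a^3 ∧ a ^ 8192 = a := by
  have e3 : a ^ 8 = a^8 := rfl
  have e4 : a ^ 16 = 1 + a^3 := by
    have h : (a^8) ^ 2 = 1 + a^3 := by
      linear_combination (1 + a^2 + a^3) * hm + (-1 - 1*a^2 - 1*a^3 - 1*a^4 - 1*a^5 - 1*a^6 - 1*a^7 - 1*a^8 - 1*a^9 - 1*a^11 - 1*a^12 - 1*a^13 - 1*a^14 - 1*a^15) * h2
    rw [show (16 : ℕ) = 8 * 2 from rfl, pow_mul, e3]
    exact h
  have e5 : a ^ 32 = 1 + a^6 := by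
    have h : (1 + a^3) ^ 2 = 1 + a^6 := by
      linear_combination (0) * hm + (1*a^3) * h2
    rw [show (32 : ℕ) = 16 * 2 from rfl, pow_mul, e4]
    exact h
  have e6 : a ^ 64 = 1 + a^12 := by
    have h : (1 + a^6) ^ 2 = 1 + a^12 := by
      linear_combination (0) * hm + (1*a^6) * h2
    rw [show (64 : ℕ) = 32 * 2 from rfl, pow_mul, e5]
    exact h
  have e7 : a ^ 128 = 1 + a^8 + a^11 := by
    have h : (1 + a^12) ^ 2 = 1 + a^8 + a^11 := by
      linear_combination (a^8 + a^10 + a^11) * hm + (-1*a^8 - 1*a^10 - 1*a^11 - 1*a^13 - 1*a^14 - 1*a^15 - 1*a^16 - 1*a^17 - 1*a^19 - 1*a^20 - 1*a^21 - 1*a^22 - 1*a^23) * h2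
    rw [show (128 : ℕ) = 64 * 2 from rfl, pow_mul, e6]
    exact h
  have e8 : a ^ 256 = a^3 + a^6 + a^9 := by
    have h : (1 + a^8 + a^11) ^ 2 = a^3 + a^6 + a^9 := by
      linear_combination (1 + a^2 + a^3 + a^6 + a^8 + a^9) * hm + (-1*a^2 - 1*a^3 - 1*a^4 - 1*a^5 - 2*a^6 - 1*a^7 - 1*a^8 - 2*a^9 - 1*a^10 - 1*a^11 - 2*a^12 - 2*a^13 - 2*a^14 - 2*a^15 - 1*a^17 - 1*a^18 - 1*a^20 - 1*a^21) * h2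
    rw [show (256 : ℕ) = 128 * 2 from rfl, pow_mul, e7]
    exact h
  have e9 : a ^ 512 = a^2 + a^5 + a^6 + a^12 := by
    have h : (a^3 + a^6 + a^9) ^ 2 = a^2 + a^5 + a^6 + a^12 := by
      linear_combination (a^2 + a^4 + a^5) * hm + (-1*a^2 - 1*a^4 - 1*a^5 - 1*a^6 - 1*a^7 - 1*a^8 - 1*a^10 - 1*a^11 + 1*a^12 - 1*a^13 - 1*a^14 - 1*a^16 - 1*a^17) * h2
    rw [show (512 : ℕ) = 256 * 2 from rfl, pow_mul, e8]
    exact h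
  have e10 : a ^ 1024 = a^4 + a^8 + a^10 + a^11 + a^12 := by
    have h : (a^2 + a^5 + a^6 + a^12) ^ 2 = a^4 + a^8 + a^10 + a^11 + a^12 := by
      linear_combination (a^8 + a^10 + a^11) * hm + (1*a^7 - 1*a^10 - 1*a^12 - 1*a^13 - 1*a^15 - 1*a^16 + 1*a^18 - 1*a^19 - 1*a^20 - 1*a^21 - 1*a^22 - 1*a^23) * h2
    rw [show (1024 : ℕ) = 512 * 2 from rfl, pow_mul, e9]
    exact h
  have e11 : a ^ 2048 = 1 + a^3 + a^4 + a^6 + a^7 + a^9 + a^11 := by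
    have h : (a^4 + a^8 + a^10 + a^11 + a^12) ^ 2 = 1 + a^3 + a^4 + a^6 + a^7 + a^9 + a^11 := by
      linear_combination (1 + a^2 + a^3 + a^4 + a^7 + a^9 + a^10 + a^11) * hm + (-1 - 1*a^2 - 1*a^3 - 2*a^4 - 1*a^5 - 2*a^6 - 2*a^7 - 1*a^8 - 3*a^9 - 1*a^10 - 3*a^11 - 1*a^12 - 3*a^13 - 1*a^14 - 2*a^15 - 1*a^16 - 1*a^17) * h2
    rw [show (2048 : ℕ) = 1024 * 2 from rfl, pow_mul, e10]
    exact h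
  have e12 : a ^ 4096 = a + a^3 + a^4 + a^5 + a^7 + a^8 + a^10 + a^11 + a^12 := by
    have h : (1 + a^3 + a^4 + a^6 + a^7 + a^9 + a^11) ^ 2 = a + a^3 + a^4 + a^5 + a^7 + a^8 + a^10 + a^11 + a^12 := by
      linear_combination (1 + a + a^2 + a^4 + a^5 + a^6 + a^8 + a^9) * hm + (-1*a^1 - 1*a^2 - 1*a^4 - 2*a^5 - 1*a^6 - 2*a^8 - 1*a^10 - 1*a^11 - 1*a^12 - 1*a^13 - 1*a^14 - 1*a^17 - 1*a^19 - 1*a^21) * h2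
    rw [show (4096 : ℕ) = 2048 * 2 from rfl, pow_mul, e11]
    exact h
  have e13 : a ^ 8192 = a := by
    have h : (a + a^3 + a^4 + a^5 + a^7 + a^8 + a^10 + a^11 + a^12) ^ 2 = a := by
      linear_combination (a + a^2 + a^3 + a^4 + a^7 + a^9 + a^10 + a^11) * hm + (-1*a^1 - 1*a^3 - 1*a^7 + 1*a^8 + 1*a^11 + 1*a^12 + 1*a^15 + 1*a^17 + 1*a^18 + 1*a^19) * h2
    rw [show (8192 : ℕ) = 4096 * 2 from rfl, pow_mul, e12]
    exact h
  exact ⟨e4, e13⟩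

theorem not_fixed_aux {R : Type*} [CommRing R] [Nontrivial R] (a : R) (h2 : (2 : R) = 0)
    (hm : 1 + a^2 + a^4 + a^5 + a^6 + a^9 + a^11 + a^12 + a^13 = 0) (h16 : 1 + a^3 = a) : False := by
  apply one_ne_zero (α := R)
  have hd : (1 + a^3 - a) * (a^2 + a^3 + a^9 + a^10) = 1 := by
    linear_combination (1) * hm + (-1 - 1*a^4 - 1*a^11) * h2
  rw [← hd, h16]; ring

theorem rel_aux {R : Type*} [CommRing R] (a : R) (h2 : (2 : R) = 0)
    (hm : 1 + a^2 + a^4 + a^5 + a^6 + a^9 + a^11 + a^12 + a^13 = 0) :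
    ∃ b : R, b ^ 2 + b = a ^ 5 ∧
      a ^ 8 = (1) + (a^3) * b ∧
      a ^ 5 * b = (1 + a^3 + a^5 + a^6 + a^7) + (1 + a^2 + a^3 + a^4) * b := by
  refine ⟨a^2 + a^4 + a^6 + a^9 + a^11 + a^12, ?_, ?_, ?_⟩
  · linear_combination (a^2 + a^4 + a^5 + a^6 + a^9 + a^10 + a^11) * hm + (-1*a^5 - 1*a^7 - 1*a^9 - 1*a^10 - 1*a^11 - 1*a^14 - 1*a^15 - 1*a^16 - 1*a^17 - 1*a^19 - 1*a^22) * h2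
  · linear_combination (1 + a^2) * hm + (-1 - 1*a^2 - 1*a^4 - 1*a^5 - 1*a^6 - 1*a^7 - 1*a^9 - 1*a^11 - 1*a^12 - 1*a^13 - 1*a^14 - 1*a^15) * h2
  · linear_combination (1 + a^3 + a^4) * hm + (-1 - 1*a^2 - 1*a^3 - 2*a^4 - 2*a^5 - 3*a^6 - 1*a^7 - 2*a^8 - 2*a^9 - 1*a^10 - 1*a^11 - 2*a^12 - 2*a^13 - 1*a^14 - 2*a^15 - 1*a^16) * h2

open Polynomial in
/-- A field extension with `8192 ^ 4` elements of characteristic two contains a root of the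
chosen degree 13 polynomial. -/
theorem exists_root_aux (L : Type*) [Field L] [Fintype L] (hc : Fintype.card L = 8192 ^ 4)
    (h2 : (2 : L) = 0) :
    ∃ a : L, 1 + a^2 + a^4 + a^5 + a^6 + a^9 + a^11 + a^12 + a^13 = 0 := by
  set m : L[X] := 1 + X^2 + X^4 + X^5 + X^6 + X^9 + X^11 + X^12 + X^13 with hm
  have hdeg : m.degree = 13 := by rw [hm]; compute_degree!
  have hr : (AdjoinRoot.root m) ^ 8192 = AdjoinRoot.root m := by
    refine (frob13_aux (AdjoinRoot.root m) ?_ ?_).2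
    · have := congrArg (AdjoinRoot.of m) h2
      rwa [map_ofNat, map_zero] at this
    · have h := AdjoinRoot.mk_self (f := m)
      have h' : AdjoinRoot.mk m (1 + X^2 + X^4 + X^5 + X^6 + X^9 + X^11 + X^12 + X^13) = 0 := h
      simpa only [map_add, map_pow, map_one, AdjoinRoot.mk_X] using h'
  have hr4 : ∀ {R : Type _} [CommRing R] (x : R) (n : ℕ), x ^ n = x → x ^ (n ^ 4) = x := by
    intro R _ x n h
    rw [show n ^ 4 = n * n * n * n by ring, pow_mul, pow_mul, pow_mul, h, h, h, h]
  have hq := hr4 _ _ hr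
  rw [← hc] at hq
  have hdvd : m ∣ X ^ Fintype.card L - X := by
    rw [← AdjoinRoot.mk_eq_zero, map_sub, map_pow, AdjoinRoot.mk_X, hq, sub_self]
  have hs : (X ^ Fintype.card L - X : L[X]).Splits := by
    rw [splits_iff_card_roots, FiniteField.roots_X_pow_card_sub_X, ← Finset.card_def,
      Finset.card_univ, FiniteField.X_pow_card_sub_X_natDegree_eq L Fintype.one_lt_card]
  have hs' : m.Splits := hs.of_dvd
    (FiniteField.X_pow_card_sub_X_ne_zero L Fintype.one_lt_card) hdvd
  obtain ⟨a, ha⟩ := hs'.exists_eval_eq_zero (by rw [hdeg]; decide)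
  refine ⟨a, ?_⟩
  simpa [hm] using ha

/-- Artin-Schreier solvability of `y ^ 2 + y = x ^ 5` over the field with 16 elements. -/
theorem exists_y_aux (K : Type*) [Field K] [Fintype K] (hK : Fintype.card K = 16)
    (h2 : (2 : K) = 0) (x : K) : ∃ y : K, y ^ 2 + y = x ^ 5 := by
  have hfr : ∀ z : K, z ^ 16 = z := fun z => by
    have := FiniteField.pow_card z
    rwa [hK] at this
  -- an element of trace one
  obtain ⟨θ, hθ⟩ : ∃ θ : K, θ + θ^2 + θ^4 + θ^8 = 1 := by
    by_contra hcon
    push Not at hcon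
    have hz : ∀ θ : K, θ + θ^2 + θ^4 + θ^8 = 0 := by
      intro θ
      have h1 : (θ + θ^2 + θ^4 + θ^8) * (θ + θ^2 + θ^4 + θ^8 - 1) = 0 := by
        linear_combination hfr θ + (θ^3 + θ^5 + θ^6 + θ^9 + θ^10 + θ^12) * h2
      rcases mul_eq_zero.1 h1 with h | h
      · exact h
      · exact absurd (sub_eq_zero.1 h) (hcon θ)
    let P : Polynomial K := .X + .X^2 + .X^4 + .X^8
    have hd : P.natDegree = 8 := by unfold P; compute_degree!
    have hP : P = 0 := by
      apply Polynomial.eq_zero_of_natDegree_lt_card_of_eval_eq_zero' P Finset.univ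
      · intro z _
        simpa [P] using hz z
      · rw [Finset.card_univ, hK, hd]; norm_num
    rw [hP] at hd
    simp at hd
  have ht : (x ^ 5) ^ 4 = x ^ 5 := by
    linear_combination x ^ 4 * hfr x
  generalize x ^ 5 = t at ht
  refine ⟨t * θ^2 + (t + t^2) * θ^4 + t^2 * θ^8, ?_⟩
  have hθ16 := hfr θ
  grind

open Polynomial in
/-- Twenty-seven points of the curve separating functions of pole order at most `28`. -/
theorem exists_points_aux (K : Type*) [Field K] [Fintype K] (hK : Fintype.card K = 16)
    (h2 : (2 : K) = 0) :
    ∃ p q : Fin 27 → K, (∀ i, q i ^ 2 + q i = p i ^ 5) ∧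
      ∀ A B : K[X], A.degree < 15 → B.degree < 12 →
        (∀ i, A.eval (p i) + B.eval (p i) * q i = 0) → A = 0 ∧ B = 0 := by
  choose y hy using exists_y_aux K hK h2
  let e : Fin 16 ≃ K := (Fintype.equivFinOfCardEq hK).symm
  let p : Fin 27 → K := fun i =>
    if h : i.1 < 24 then e ⟨i.1 / 2, by omega⟩ else e ⟨i.1 - 12, by omega⟩
  let q : Fin 27 → K := fun i => if i.1 < 24 ∧ i.1 % 2 = 1 then y (p i) + 1 else y (p i)
  refine ⟨p, q, ?_, ?_⟩
  · intro i
    by_cases h : i.1 < 24 ∧ i.1 % 2 = 1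
    · simp only [q, h, and_self, if_true]
      linear_combination hy (p i) + (y (p i) + 1) * h2
    · simp only [q, h, if_false]
      exact hy _
  · intro A B hA hB h
    have hB0 : B = 0 := by
      refine Polynomial.eq_zero_of_degree_lt_of_eval_index_eq_zero
        (s := (Finset.univ : Finset (Fin 12)))
        (v := fun i : Fin 12 => e ⟨i.1, by omega⟩) ?_ (by simpa using hB) ?_
      · intro i _ j _ hij
        have := e.injective hij
        simpa [Fin.ext_iff] using this
      · intro i _
        have h0 := h ⟨2 * i.1, by omega⟩
        have h1 := h ⟨2 * i.1 + 1, by omega⟩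
        have hp0 : p ⟨2 * i.1, by omega⟩ = e ⟨i.1, by omega⟩ := by
          have : 2 * i.1 < 24 := by omega
          simp only [p, this, dif_pos]
          congr 2; omega
        have hp1 : p ⟨2 * i.1 + 1, by omega⟩ = e ⟨i.1, by omega⟩ := by
          have : 2 * i.1 + 1 < 24 := by omega
          simp only [p, this, dif_pos]
          congr 2; omega
        have hq0 : q ⟨2 * i.1, by omega⟩ = y (e ⟨i.1, by omega⟩) := by
          have : ¬ (2 * i.1 < 24 ∧ 2 * i.1 % 2 = 1) := by omega
          simp only [q, this, if_false, hp0]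
        have hq1 : q ⟨2 * i.1 + 1, by omega⟩ = y (e ⟨i.1, by omega⟩) + 1 := by
          have : (2 * i.1 + 1 < 24 ∧ (2 * i.1 + 1) % 2 = 1) := by omega
          simp only [q, this, and_self, if_true, hp1]
        rw [hp0, hq0] at h0
        rw [hp1, hq1] at h1
        linear_combination h1 - h0
    subst hB0
    refine ⟨?_, rfl⟩
    refine Polynomial.eq_zero_of_degree_lt_of_eval_index_eq_zero
        (s := (Finset.univ : Finset (Fin 15)))
        (v := fun i : Fin 15 => e ⟨i.1, by omega⟩) ?_ (by simpa using hA) ?_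
    · intro i _ j _ hij
      have := e.injective hij
      simpa [Fin.ext_iff] using this
    · intro i _
      by_cases hi : i.1 < 12
      · have h0 := h ⟨2 * i.1, by omega⟩
        have hp0 : p ⟨2 * i.1, by omega⟩ = e ⟨i.1, by omega⟩ := by
          have : 2 * i.1 < 24 := by omega
          simp only [p, this, dif_pos]
          congr 2; omega
        rw [hp0] at h0
        simpa using h0
      · have h0 := h ⟨i.1 + 12, by omega⟩
        have hp0 : p ⟨i.1 + 12, by omega⟩ = e ⟨i.1, by omega⟩ := by
          have : ¬ (i.1 + 12 < 24) := by omega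
          simp only [p, this, dif_neg, not_false_eq_true]
          congr 2
        rw [hp0] at h0
        simpa using h0

open Polynomial in
/-- The abstract interpolation argument. -/
theorem interp_aux (K : Type*) [Field K] (L : Type*) [Field L] [Algebra K L]
    (a b : L) (hab : b ^ 2 + b = a ^ 5)
    (hsurj : ∀ x : L, ∃ A B : K[X], A.degree < 8 ∧ B.degree < 5 ∧
      aeval a A + aeval a B * b = x)
    (p q : Fin 27 → K) (hpq : ∀ i, q i ^ 2 + q i = p i ^ 5)
    (hinj : ∀ A B : K[X], A.degree < 15 → B.degree < 12 →
        (∀ i, A.eval (p i) + B.eval (p i) * q i = 0) → A = 0 ∧ B = 0) :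
    ∃ (xs ys : Fin 27 → (L →ₗ[K] K)) (c : Fin 27 → L),
      ∀ x y : L, x * y = ∑ i, (xs i x * ys i y) • c i := by
  let Φ : (K[X] × K[X]) →ₗ[K] L :=
    LinearMap.coprod (aeval a).toLinearMap
      ((LinearMap.mulRight K b).comp (aeval a).toLinearMap)
  have hΦ : ∀ f, Φ f = aeval a f.1 + aeval a f.2 * b := fun f => by simp [Φ]
  let ev : (K[X] × K[X]) →ₗ[K] (Fin 27 → K) := LinearMap.pi fun i =>
    LinearMap.coprod (aeval (p i)).toLinearMap
      ((LinearMap.mulRight K (q i)).comp (aeval (p i)).toLinearMap)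
  have hev : ∀ f i, ev f i = f.1.eval (p i) + f.2.eval (p i) * q i := fun f i => by
    simp [ev, coe_aeval_eq_eval]
  let V : Submodule K (K[X] × K[X]) := (degreeLT K 8).prod (degreeLT K 5)
  let W : Submodule K (K[X] × K[X]) := (degreeLT K 15).prod (degreeLT K 12)
  obtain ⟨s, hs⟩ := LinearMap.exists_rightInverse_of_surjective (Φ.domRestrict V) (by
    rw [LinearMap.range_eq_top]
    intro x
    obtain ⟨A, B, hA, hB, h⟩ := hsurj x
    refine ⟨⟨(A, B), ?_⟩, ?_⟩
    · exact ⟨mem_degreeLT.2 hA, mem_degreeLT.2 hB⟩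
    · rw [LinearMap.domRestrict_apply, hΦ]; exact h)
  obtain ⟨l, hl⟩ := LinearMap.exists_leftInverse_of_injective (ev.domRestrict W) (by
    rw [LinearMap.ker_eq_bot']
    rintro ⟨⟨A, B⟩, hA, hB⟩ h
    have := hinj A B (mem_degreeLT.1 hA) (mem_degreeLT.1 hB) (fun i => by
      have := congrFun h i
      rw [LinearMap.domRestrict_apply, hev] at this
      exact this)
    ext1
    exact Prod.ext this.1 this.2)
  refine ⟨fun i => (LinearMap.proj i).comp (ev.comp (V.subtype.comp s)),
    fun i => (LinearMap.proj i).comp (ev.comp (V.subtype.comp s)),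
    fun i => Φ (l (Pi.single i 1)), ?_⟩
  intro x y
  have hsx : ∀ x, Φ (s x) = x := fun x => by
    have := LinearMap.congr_fun hs x
    simpa using this
  obtain ⟨f, hf, hfx⟩ : ∃ f, f ∈ V ∧ (s x : K[X] × K[X]) = f := ⟨_, (s x).2, rfl⟩
  obtain ⟨g, hg, hgy⟩ : ∃ f, f ∈ V ∧ (s y : K[X] × K[X]) = f := ⟨_, (s y).2, rfl⟩
  have hx := hsx x
  have hy := hsx y
  rw [hfx, hΦ] at hx
  rw [hgy, hΦ] at hy
  let h : K[X] × K[X] := (f.1 * g.1 + f.2 * g.2 * X ^ 5, f.1 * g.2 + f.2 * g.1 - f.2 * g.2)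
  have hevh : ∀ i, ev h i = ev f i * ev g i := by
    intro i
    simp only [hev, h, eval_add, eval_sub, eval_mul, eval_pow, eval_X]
    linear_combination (-(f.2.eval (p i) * g.2.eval (p i))) * hpq i
  have hΦh : Φ h = x * y := by
    rw [← hx, ← hy]
    simp only [hΦ, h, map_add, map_sub, map_mul, map_pow, aeval_X]
    linear_combination (-(aeval a f.2 * aeval a g.2)) * hab
  have hhW : h ∈ W := by
    have key : ∀ (u v : K[X]) (k n r : ℕ), u.natDegree ≤ k → v.natDegree ≤ n → k + n ≤ r →
        (u * v).natDegree ≤ r := fun u v k n r hu hv hr =>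
      natDegree_mul_le.trans ((Nat.add_le_add hu hv).trans hr)
    have conv : ∀ (u : K[X]) (k : ℕ), u ∈ degreeLT K (k + 1) ↔ u.natDegree ≤ k := by
      intro u k
      rw [mem_degreeLT, ← Nat.lt_succ_iff]
      by_cases hu : u = 0
      · subst hu
        simp
      · exact (natDegree_lt_iff_degree_lt hu).symm
    have f1 := (conv _ 7).1 hf.1
    have f2 := (conv _ 4).1 hf.2
    have g1 := (conv _ 7).1 hg.1
    have g2 := (conv _ 4).1 hg.2
    constructor
    · refine Submodule.add_mem _ ((conv _ 14).2 (key _ _ 7 7 _ f1 g1 (by norm_num)))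
        ((conv _ 14).2 (key _ _ 8 5 _ (key _ _ 4 4 _ f2 g2 (by norm_num)) ?_ (by norm_num)))
      exact natDegree_X_pow_le 5
    · exact Submodule.sub_mem _ (Submodule.add_mem _
        ((conv _ 11).2 (key _ _ 7 4 _ f1 g2 (by norm_num)))
        ((conv _ 11).2 (key _ _ 4 7 _ f2 g1 (by norm_num))))
        ((conv _ 11).2 (key _ _ 4 4 _ f2 g2 (by norm_num)))
  have hlh : (l (ev h) : K[X] × K[X]) = h := by
    have := LinearMap.congr_fun hl ⟨h, hhW⟩
    have := congrArg Subtype.val this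
    simpa using this
  have hsum : ev h = ∑ i, (ev f i * ev g i) • (Pi.single i (1 : K) : Fin 27 → K) := by
    ext j
    simp [hevh, Finset.sum_apply, Pi.single_apply]
  rw [← hΦh, ← hlh, hsum]
  simp [hfx, hgy]

open Polynomial in
theorem surj_aux (K : Type*) [Field K] (L : Type*) [Field L] [Algebra K L]
    (a b : L) (hgen : Algebra.adjoin K {a} = ⊤)
    (h8 : a ^ 8 = (1) + (a^3) * b)
    (h5 : a ^ 5 * b = (1 + a^3 + a^5 + a^6 + a^7) + (1 + a^2 + a^3 + a^4) * b) :
    ∀ x : L, ∃ A B : K[X], A.degree < 8 ∧ B.degree < 5 ∧ aeval a A + aeval a B * b = x := by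
  let S : Submodule K L := Submodule.span K
    ((fun i => a ^ i) '' Set.Iio 8 ∪ (fun i => a ^ i * b) '' Set.Iio 5)
  have hA : ∀ i < 8, a ^ i ∈ S := fun i hi =>
    Submodule.subset_span (Or.inl ⟨i, hi, rfl⟩)
  have hB : ∀ i < 5, a ^ i * b ∈ S := fun i hi =>
    Submodule.subset_span (Or.inr ⟨i, hi, rfl⟩)
  have hh8 : a ^ 8 ∈ S := by
    rw [h8]
    exact S.add_mem (by simpa using hA 0 (by norm_num)) (hB 3 (by norm_num))
  have hh5 : a ^ 5 * b ∈ S := by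
    rw [h5, show (1 + a^3 + a^5 + a^6 + a^7) + (1 + a^2 + a^3 + a^4) * b =
      a^0 + a^3 + a^5 + a^6 + a^7 + a^0 * b + a^2 * b + a^3 * b + a^4 * b by ring]
    repeat' apply S.add_mem
    all_goals first
      | exact hA _ (by norm_num)
      | exact hB _ (by norm_num)
  have hmul : ∀ x ∈ S, a * x ∈ S := by
    intro x hx
    induction hx using Submodule.span_induction with
    | mem x hx =>
      rcases hx with ⟨i, hi, rfl⟩ | ⟨i, hi, rfl⟩
      · have hi : i < 8 := hi
        simp only [← pow_succ']
        rcases Nat.lt_or_ge (i + 1) 8 with h | h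
        · exact hA _ h
        · rw [show i + 1 = 8 by omega]; exact hh8
      · have hi : i < 5 := hi
        simp only [← mul_assoc, ← pow_succ']
        rcases Nat.lt_or_ge (i + 1) 5 with h | h
        · exact hB _ h
        · rw [show i + 1 = 5 by omega]; exact hh5
    | zero => simp
    | add x y _ _ hx hy => rw [mul_add]; exact S.add_mem hx hy
    | smul c x _ hx => rw [mul_smul_comm]; exact S.smul_mem c hx
  have hpow : ∀ n, a ^ n ∈ S := by
    intro n
    induction n with
    | zero => exact hA 0 (by norm_num)
    | succ n ih => rw [pow_succ']; exact hmul _ ih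
  intro x
  have hx : x ∈ S := by
    have : x ∈ Algebra.adjoin K {a} := by rw [hgen]; trivial
    rw [Algebra.adjoin_singleton_eq_range_aeval] at this
    obtain ⟨P, rfl⟩ := this
    change aeval a P ∈ S
    rw [aeval_eq_sum_range]
    exact S.sum_mem fun i _ => S.smul_mem _ (hpow i)
  induction hx using Submodule.span_induction with
  | mem x hx =>
    rcases hx with ⟨i, hi, rfl⟩ | ⟨i, hi, rfl⟩
    · refine ⟨X ^ i, 0, ?_, ?_, by simp⟩
      · rw [degree_X_pow]; exact_mod_cast hi
      · rw [degree_zero]; exact WithBot.bot_lt_coe 5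
    · refine ⟨0, X ^ i, ?_, ?_, by simp⟩
      · rw [degree_zero]; exact WithBot.bot_lt_coe 8
      · rw [degree_X_pow]; exact_mod_cast hi
  | zero =>
    exact ⟨0, 0, by rw [degree_zero]; exact WithBot.bot_lt_coe 8,
      by rw [degree_zero]; exact WithBot.bot_lt_coe 5, by simp⟩
  | add x y _ _ hx hy =>
    obtain ⟨A, B, h1, h2, h3⟩ := hx
    obtain ⟨A₂, B₂, hh1, hh2, hh3⟩ := hy
    refine ⟨A + A₂, B + B₂, (degree_add_le _ _).trans_lt (max_lt h1 hh1),
      (degree_add_le _ _).trans_lt (max_lt h2 hh2), ?_⟩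
    rw [← h3, ← hh3, map_add, map_add]; ring
  | smul c x _ hx =>
    obtain ⟨A, B, h1, h2, h3⟩ := hx
    refine ⟨c • A, c • B, (degree_smul_le _ _).trans_lt h1, (degree_smul_le _ _).trans_lt h2, ?_⟩
    rw [← h3, map_smul, map_smul, smul_add, smul_mul_assoc]

/-- The paper's effective asymmetric Chudnovsky-type construction: multiplication in
`F_{16^13}` (modelled by `L`, the degree-13 extension of the field `K` with 16 elements)
admits a bilinear multiplication algorithm with 27 bilinear multiplications; in particular
the bilinear complexity of `F_{16^13}` over `F_16` is at most 27. -/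
theorem bilinear_mul_F16_13
    (K : Type*) [Field K] [Fintype K] (hK : Fintype.card K = 16)
    (L : Type*) [Field L] [Algebra K L] (hL : Module.finrank K L = 13) :
    ∃ (xs ys : Fin 27 → (L →ₗ[K] K)) (c : Fin 27 → L),
      ∀ x y : L, x * y = ∑ i, (xs i x * ys i y) • c i := by
  have h2K : (2 : K) = 0 := by
    have h := FiniteField.cast_card_eq_zero K
    rw [hK] at h
    have h' : (2 : K) ^ 4 = 0 := by
      rw [← h]; norm_num
    exact pow_eq_zero_iff (by norm_num) |>.1 h'
  have h2L : (2 : L) = 0 := by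
    have := congrArg (algebraMap K L) h2K
    rwa [map_ofNat, map_zero] at this
  have : FiniteDimensional K L := FiniteDimensional.of_finrank_pos (by rw [hL]; norm_num)
  have : Finite L := Module.finite_of_finite K
  let : Fintype L := Fintype.ofFinite L
  have hcL : Fintype.card L = 8192 ^ 4 := by
    rw [Module.card_eq_pow_finrank (K := K), hK, hL]; norm_num
  obtain ⟨a, ha⟩ := exists_root_aux L hcL h2L
  obtain ⟨b, hab, h8, h5⟩ := rel_aux a h2L ha
  have hgen : Algebra.adjoin K {a} = ⊤ := by
    have := Subalgebra.isSimpleOrder_of_finrank_prime K L (by rw [hL]; norm_num)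
    rcases eq_bot_or_eq_top (Algebra.adjoin K {a}) with h | h
    · exfalso
      have hmem : a ∈ (⊥ : Subalgebra K L) := h ▸ Algebra.self_mem_adjoin_singleton K a
      obtain ⟨k, hk⟩ := Algebra.mem_bot.1 hmem
      have hk16 : k ^ 16 = k := by
        have := FiniteField.pow_card k
        rwa [hK] at this
      have ha16 : a ^ 16 = a := by rw [← hk, ← map_pow, hk16]
      exact not_fixed_aux a h2L ha ((frob13_aux a h2L ha).1.symm.trans ha16)
    · exact h
  obtain ⟨p, q, hpq, hinj⟩ := exists_points_aux K hK h2K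
  exact interp_aux K L a b hab (surj_aux K L a b hgen h8 h5) p q hpq hinj
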